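/- Setting T = 2π √( r₀³ / (G(1+e)³(m₁+m₂)) ), the solution θ of the angular ODE satisfies θ(t + T) = θ(t) + 2π for all t ∈ ℝ. -/

import Mathlib

open Real

/-!
Separation of variables: an autonomous equation `θ' = f(θ)` with `f > 0` makes `∫₀^θ 1/f` grow at
unit speed, so if `f` has period `L` then `θ` advances by `L` in time `∫₀^L 1/f`. For
`f(x) = c (1 - e cos x)²` this time is found from two exact derivatives. With `s = √(1 - e²)`,

* `x + 2 arctan (e sin x / (1 + s - e cos x))` has derivative `s / (1 - e cos x)`; it is the
  half-angle substitution, rewritten so as to be smooth on all of `ℝ`;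
* `e sin x / (1 - e cos x)` has derivative `(1 - e²) / (1 - e cos x)² - 1 / (1 - e cos x)`, which
  reduces the second power of the denominator to the first.
-/

theorem add_period_of_hasDerivAt_comp {f θ : ℝ → ℝ} {L : ℝ} (hf : Continuous f)
    (hf_pos : ∀ x, 0 < f x) (hf_per : Function.Periodic f L)
    (hθ : ∀ t, HasDerivAt θ (f (θ t)) t) (t : ℝ) :
    θ (t + ∫ x in 0..L, (f x)⁻¹) = θ t + L := by
  have inv_cont : Continuous fun x ↦ (f x)⁻¹ := hf.inv₀ fun x ↦ (hf_pos x).ne'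
  set F : ℝ → ℝ := fun y ↦ ∫ x in 0..y, (f x)⁻¹
  have F_deriv (y : ℝ) : HasDerivAt F (f y)⁻¹ y :=
    (inv_cont.integral_hasStrictDerivAt 0 y).hasDerivAt
  have F_strictMono : StrictMono F := strictMono_of_deriv_pos fun y ↦ by
    rw [(F_deriv y).deriv]
    exact inv_pos.2 (hf_pos y)
  have F_add_period (y : ℝ) : F (y + L) = F y + F L := by
    have inv_per : Function.Periodic (fun x ↦ (f x)⁻¹) L := fun x ↦ congrArg (·⁻¹) (hf_per x)
    calc F (y + L) = F y + ∫ x in y..y + L, (f x)⁻¹ :=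
          (intervalIntegral.integral_add_adjacent_intervals
            (inv_cont.intervalIntegrable _ _) (inv_cont.intervalIntegrable _ _)).symm
      _ = F y + F L := by rw [inv_per.intervalIntegral_add_eq y 0, zero_add]
  have F_unit_speed (u v : ℝ) : F (θ u) - u = F (θ v) - v := by
    have deriv_zero (w : ℝ) : HasDerivAt (fun w ↦ F (θ w) - w) 0 w := by
      refine (((F_deriv (θ w)).comp w (hθ w)).sub (hasDerivAt_id w)).congr_deriv ?_
      rw [inv_mul_cancel₀ (hf_pos _).ne', sub_self]
    exact is_const_of_deriv_eq_zero (fun w ↦ (deriv_zero w).differentiableAt)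
      (fun w ↦ (deriv_zero w).deriv) u v
  apply F_strictMono.injective
  rw [F_add_period]
  linarith [F_unit_speed (t + F L) t]

section Eccentricity

variable {e : ℝ}

theorem one_sub_mul_cos_pos (he : |e| < 1) (x : ℝ) : 0 < 1 - e * cos x := by
  have : |e * cos x| < 1 := by
    rw [abs_mul]
    exact mul_lt_one_of_nonneg_of_lt_one_left (abs_nonneg e) he (abs_cos_le_one x)
  linarith [le_abs_self (e * cos x)]

theorem one_sub_sq_pos (he : |e| < 1) : 0 < 1 - e ^ 2 :=
  sub_pos.2 ((sq_lt_one_iff_abs_lt_one e).2 he)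

theorem hasDerivAt_mul_sin_div_sub_mul_cos {a x : ℝ} (h : a - e * cos x ≠ 0) :
    HasDerivAt (fun x ↦ e * sin x / (a - e * cos x))
      ((a * e * cos x - e ^ 2) / (a - e * cos x) ^ 2) x := by
  refine (((hasDerivAt_sin x).const_mul e).div
    (((hasDerivAt_cos x).const_mul e).const_sub a) h).congr_deriv ?_
  congr 1
  linear_combination -e ^ 2 * sin_sq_add_cos_sq x

theorem hasDerivAt_add_two_mul_arctan (he : |e| < 1) (x : ℝ) :
    HasDerivAt (fun x ↦ x + 2 * arctan (e * sin x / (1 + √(1 - e ^ 2) - e * cos x)))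
      (√(1 - e ^ 2) / (1 - e * cos x)) x := by
  have hs_sq : √(1 - e ^ 2) ^ 2 = 1 - e ^ 2 := sq_sqrt (one_sub_sq_pos he).le
  have hs_nonneg : 0 ≤ √(1 - e ^ 2) := sqrt_nonneg _
  set s := √(1 - e ^ 2)
  have hq : 0 < 1 - e * cos x := one_sub_mul_cos_pos he x
  have hd : 0 < 1 + s - e * cos x := by linarith
  have one_add_sq : 1 + (e * sin x / (1 + s - e * cos x)) ^ 2 =
      2 * (1 + s) * (1 - e * cos x) / (1 + s - e * cos x) ^ 2 := by
    field_simp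
    linear_combination e ^ 2 * sin_sq_add_cos_sq x + hs_sq
  refine ((hasDerivAt_id x).add
    ((hasDerivAt_mul_sin_div_sub_mul_cos hd.ne').arctan.const_mul 2)).congr_deriv ?_
  rw [one_add_sq]
  field_simp
  linear_combination -hs_sq

theorem integral_inv_one_sub_mul_cos (he : |e| < 1) :
    ∫ x in 0..2 * π, (1 - e * cos x)⁻¹ = 2 * π / √(1 - e ^ 2) := by
  have hs : √(1 - e ^ 2) ≠ 0 := (sqrt_pos.2 (one_sub_sq_pos he)).ne'
  have cont : Continuous fun x ↦ √(1 - e ^ 2) / (1 - e * cos x) :=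
    continuous_const.div (by fun_prop) fun x ↦ (one_sub_mul_cos_pos he x).ne'
  have key := intervalIntegral.integral_eq_sub_of_hasDerivAt
    (fun x _ ↦ hasDerivAt_add_two_mul_arctan he x) (cont.intervalIntegrable 0 (2 * π))
  simp only [div_eq_mul_inv, intervalIntegral.integral_const_mul, sin_two_pi, sin_zero, mul_zero,
    zero_mul, arctan_zero, add_zero, sub_zero] at key
  rw [eq_div_iff hs, mul_comm, key]

theorem integral_inv_one_sub_mul_cos_sq (he : |e| < 1) :
    ∫ x in 0..2 * π, ((1 - e * cos x) ^ 2)⁻¹ = 2 * π / √(1 - e ^ 2) ^ 3 := by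
  have hq (x : ℝ) : 1 - e * cos x ≠ 0 := (one_sub_mul_cos_pos he x).ne'
  have hs_pos : 0 < √(1 - e ^ 2) := sqrt_pos.2 (one_sub_sq_pos he)
  have hs_sq : √(1 - e ^ 2) ^ 2 = 1 - e ^ 2 := sq_sqrt (one_sub_sq_pos he).le
  have cont_inv : Continuous fun x ↦ (1 - e * cos x)⁻¹ :=
    Continuous.inv₀ (by fun_prop) hq
  have cont_inv_sq : Continuous fun x ↦ (1 - e ^ 2) * ((1 - e * cos x) ^ 2)⁻¹ :=
    continuous_const.mul (Continuous.inv₀ (by fun_prop) fun x ↦ pow_ne_zero 2 (hq x))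
  have deriv_eq (x : ℝ) : HasDerivAt (fun x ↦ e * sin x / (1 - e * cos x))
      ((1 - e ^ 2) * ((1 - e * cos x) ^ 2)⁻¹ - (1 - e * cos x)⁻¹) x := by
    refine (hasDerivAt_mul_sin_div_sub_mul_cos (hq x)).congr_deriv ?_
    have := hq x
    field_simp
    ring
  have reduction : (1 - e ^ 2) * ∫ x in 0..2 * π, ((1 - e * cos x) ^ 2)⁻¹ =
      ∫ x in 0..2 * π, (1 - e * cos x)⁻¹ := by
    have key := intervalIntegral.integral_eq_sub_of_hasDerivAt (fun x _ ↦ deriv_eq x)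
      ((cont_inv_sq.sub cont_inv).intervalIntegrable 0 (2 * π))
    rw [intervalIntegral.integral_sub (cont_inv_sq.intervalIntegrable _ _)
      (cont_inv.intervalIntegrable _ _), intervalIntegral.integral_const_mul] at key
    simpa [sub_eq_zero] using key
  rw [integral_inv_one_sub_mul_cos he, eq_div_iff hs_pos.ne'] at reduction
  rw [eq_div_iff (pow_pos hs_pos 3).ne', pow_succ, hs_sq]
  linear_combination reduction

theorem add_two_pi_of_hasDerivAt_mul_one_sub_mul_cos_sq (he : |e| < 1) {c : ℝ} (hc : 0 < c)
    {θ : ℝ → ℝ} (hθ : ∀ t, HasDerivAt θ (c * (1 - e * cos (θ t)) ^ 2) t) (t : ℝ) :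
    θ (t + c⁻¹ * (2 * π / √(1 - e ^ 2) ^ 3)) = θ t + 2 * π := by
  have := add_period_of_hasDerivAt_comp (f := fun x ↦ c * (1 - e * cos x) ^ 2)
    (L := 2 * π) (by fun_prop)
    (fun x ↦ mul_pos hc (pow_pos (one_sub_mul_cos_pos he x) 2))
    (fun x ↦ by simp only [cos_add_two_pi]) hθ t
  simpa only [mul_inv, intervalIntegral.integral_const_mul,
    integral_inv_one_sub_mul_cos_sq he] using this

theorem inv_sqrt_mul_inv_sqrt_one_sub_sq_pow {k r : ℝ} (hk : 0 < k) (hr : 0 < r) (he : |e| < 1) :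
    (√(k / ((1 - e) ^ 3 * r ^ 3)))⁻¹ * (√(1 - e ^ 2) ^ 3)⁻¹ = √(r ^ 3 / (k * (1 + e) ^ 3)) := by
  obtain ⟨he_neg, he_lt⟩ := abs_lt.1 he
  have h_add : 0 < 1 + e := by linarith
  have h_factor : 1 - e ^ 2 = (1 - e) * (1 + e) := by ring
  rw [← mul_inv, ← sqrt_sq (pow_nonneg (sqrt_nonneg (1 - e ^ 2)) 3), pow_right_comm,
    sq_sqrt (one_sub_sq_pos he).le, ← sqrt_mul (by positivity), ← sqrt_inv, h_factor]
  congr 1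
  field_simp

end Eccentricity

theorem angular_ode_period_general {G r₀ m₁ m₂ e : ℝ} (hG : 0 < G) (hr₀ : 0 < r₀)
    (hm : 0 < m₁ + m₂) (he : |e| < 1) {θ : ℝ → ℝ}
    (hθ : ∀ t, HasDerivAt θ
      (√(G * (m₁ + m₂) / ((1 - e) ^ 3 * r₀ ^ 3)) * (1 - e * cos (θ t)) ^ 2) t) (t : ℝ) :
    θ (t + 2 * π * √(r₀ ^ 3 / (G * (1 + e) ^ 3 * (m₁ + m₂)))) = θ t + 2 * π := by
  have h_sub : 0 < 1 - e := sub_pos.2 (abs_lt.1 he).2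
  have hc : 0 < √(G * (m₁ + m₂) / ((1 - e) ^ 3 * r₀ ^ 3)) := sqrt_pos.2 (by positivity)
  rw [mul_right_comm G, ← inv_sqrt_mul_inv_sqrt_one_sub_sq_pow (mul_pos hG hm) hr₀ he,
    mul_left_comm, ← div_eq_mul_inv]
  exact add_two_pi_of_hasDerivAt_mul_one_sub_mul_cos_sq he hc hθ t

/-- With `T = 2π √(r₀³/(G(1+e)³(m₁+m₂)))`, the solution of the angular ODE satisfies
`θ(t + T) = θ(t) + 2π` for all `t`. -/
theorem angular_ode_period
    (G r₀ m₁ m₂ e : ℝ) (hG : 0 < G) (hr₀ : 0 < r₀) (hm₁ : 0 < m₁) (hm₂ : 0 < m₂)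
    (he₀ : 0 < e) (he₁ : e < 1)
    (c : ℝ) (hc : c = Real.sqrt (G * (m₁ + m₂) / ((1 - e) ^ 3 * r₀ ^ 3)))
    (θ : ℝ → ℝ) (hθdiff : Differentiable ℝ θ)
    (hθ' : ∀ t, deriv θ t = c * (1 - e * Real.cos (θ t)) ^ 2)
    (hθ0 : θ 0 = 0)
    (T : ℝ) (hT : T = 2 * π * Real.sqrt (r₀ ^ 3 / (G * (1 + e) ^ 3 * (m₁ + m₂)))) :
    ∀ t : ℝ, θ (t + T) = θ t + 2 * π := by
  subst hc hT
  exact angular_ode_period_general hG hr₀ (add_pos hm₁ hm₂) (by rwa [abs_of_pos he₀])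
    fun t ↦ hθ' t ▸ (hθdiff t).hasDerivAt
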